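/- Let G be a finite simple graph, let L be a set of specified leaks on V(G), and let ℓ = I(L) be the maximum size of an independent subset of L. Then every specified ℓ-leaky forcing set B of G is an L-leaky forcing set of G; in particular Z_L(G) ≤ Z^s_(ℓ)(G). -/

import Mathlib

/-!
Zero forcing with leaks (vertex leaks, edge leaks, specified leaks, mixed leaks).

A force `u → v` is modelled as the ordered pair `(u, v) : V × V`.  All the
leak notions are encoded by a set `P` of *prohibited* forces.
-/

variable {V : Type*}

/-- With blue set `S` and prohibited set of forces `P`, vertex `u` can force `v`:
`u` is blue, `v` is a white neighbor of `u`, every other neighbor of `u` is blue,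
and the force `u → v` is not prohibited. -/
def CanForce (G : SimpleGraph V) (P : Set (V × V)) (S : Set V) (u v : V) : Prop :=
  u ∈ S ∧ v ∉ S ∧ G.Adj u v ∧ (∀ w, G.Adj u w → w ≠ v → w ∈ S) ∧ (u, v) ∉ P

/-- `Forced G P B v` means vertex `v` is eventually colored blue when the zero
forcing color change rule (avoiding the prohibited forces `P`) is applied
exhaustively starting from the blue set `B`. -/
inductive Forced (G : SimpleGraph V) (P : Set (V × V)) (B : Set V) : V → Prop
  | init : ∀ {v : V}, v ∈ B → Forced G P B v
  | force : ∀ {u v : V}, G.Adj u v → (u, v) ∉ P → Forced G P B u →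
      (∀ w, G.Adj u w → w ≠ v → Forced G P B w) → Forced G P B v

/-- `B^[∞]_P`, the set of blue vertices after exhaustively applying the zero
forcing rule with prohibited forces `P`, starting from `B`. -/
def closureSet (G : SimpleGraph V) (P : Set (V × V)) (B : Set V) : Set V :=
  {v | Forced G P B v}

/-- The prohibited forces corresponding to a set `L` of vertex leaks: a vertex
leak may not perform any force. -/
def vertexLeaks (L : Set V) : Set (V × V) := {p | p.1 ∈ L}

/-- The prohibited forces corresponding to a set `L` of edge leaks: no force may
pass across an edge leak in either direction. -/
def edgeLeaksP (L : Set (Sym2 V)) : Set (V × V) := {p | s(p.1, p.2) ∈ L}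

/-- `B` is an `ℓ`-leaky forcing set of `G`: despite any set of (at most) `ℓ`
vertex leaks, exhaustive forcing colors all of `V(G)` blue. -/
def IsLeakyForcingSet (G : SimpleGraph V) (ℓ : ℕ) (B : Set V) : Prop :=
  ∀ L : Finset V, L.card ≤ ℓ → closureSet G (vertexLeaks ↑L) B = Set.univ

/-- `B` is an `ℓ`-edge-leaky forcing set of `G`: despite any set of (at most)
`ℓ` edge leaks, exhaustive forcing colors all of `V(G)` blue. -/
def IsEdgeLeakyForcingSet (G : SimpleGraph V) (ℓ : ℕ) (B : Set V) : Prop :=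
  ∀ L : Finset (Sym2 V), ↑L ⊆ G.edgeSet → L.card ≤ ℓ →
    closureSet G (edgeLeaksP ↑L) B = Set.univ

/-- `B` is a specified `ℓ`-leaky forcing set of `G`: despite any set of (at
most) `ℓ` specified leaks (prohibited forces between adjacent vertices),
exhaustive forcing colors all of `V(G)` blue. -/
def IsSpecifiedLeakyForcingSet (G : SimpleGraph V) (ℓ : ℕ) (B : Set V) : Prop :=
  ∀ L : Finset (V × V), (∀ p ∈ L, G.Adj p.1 p.2) → L.card ≤ ℓ →
    closureSet G (↑L) B = Set.univ

/-- `B` is a mixed `ℓ`-leaky forcing set of `G`: despite any set of (at most)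
`ℓ` leaks, each a vertex leak, an edge leak, or a specified leak, exhaustive
forcing colors all of `V(G)` blue. -/
def IsMixedLeakyForcingSet (G : SimpleGraph V) (ℓ : ℕ) (B : Set V) : Prop :=
  ∀ (L₁ : Finset V) (L₂ : Finset (Sym2 V)) (L₃ : Finset (V × V)),
    ↑L₂ ⊆ G.edgeSet → (∀ p ∈ L₃, G.Adj p.1 p.2) →
    L₁.card + L₂.card + L₃.card ≤ ℓ →
    closureSet G (vertexLeaks ↑L₁ ∪ edgeLeaksP ↑L₂ ∪ (↑L₃ : Set (V × V))) B = Set.univ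

/-- A chronologically valid list of forces starting from a blue set. -/
def ValidList (G : SimpleGraph V) (P : Set (V × V)) : Set V → List (V × V) → Prop
  | _, [] => True
  | S, f :: l => CanForce G P S f.1 f.2 ∧ ValidList G P (insert f.2 S) l

/-- `F` is a forcing process (set of forces) of `B` in `G` with prohibited
forces `P`: the forces of `F` admit a chronological ordering in which each force
is valid and after applying all of them the whole graph is blue. -/
def IsForcingProcess (G : SimpleGraph V) (P : Set (V × V)) (B : Set V)
    (F : Set (V × V)) : Prop :=
  ∃ l : List (V × V), {f | f ∈ l} = F ∧ ValidList G P B l ∧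
    B ∪ Prod.snd '' F = Set.univ

/-- `B'` is obtained from `B` using `F`: `B` can color exactly `B'` blue using
only a subset of the forces in `F`, applied in a chronologically valid order. -/
def ObtainedUsing (G : SimpleGraph V) (P : Set (V × V)) (B : Set V) (F : Set (V × V))
    (B' : Set V) : Prop :=
  ∃ l : List (V × V), (∀ f ∈ l, f ∈ F) ∧ ValidList G P B l ∧
    B' = B ∪ Prod.snd '' {f | f ∈ l}

/-- `ℱ_P(B)`: the set of forces that belong to some forcing process of `B`
(with prohibited forces `P`). -/
def potentialForces (G : SimpleGraph V) (P : Set (V × V)) (B : Set V) : Set (V × V) :=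
  {f | ∃ F, IsForcingProcess G P B F ∧ f ∈ F}

/-- `Z_(ℓ)(G)`, the `ℓ`-leaky forcing number of `G`. -/
noncomputable def Zleaky (G : SimpleGraph V) (ℓ : ℕ) : ℕ :=
  sInf {n | ∃ B : Finset V, B.card = n ∧ IsLeakyForcingSet G ℓ ↑B}

/-- `Z'_(ℓ)(G)`, the `ℓ`-edge-leaky forcing number of `G`. -/
noncomputable def ZedgeLeaky (G : SimpleGraph V) (ℓ : ℕ) : ℕ :=
  sInf {n | ∃ B : Finset V, B.card = n ∧ IsEdgeLeakyForcingSet G ℓ ↑B}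

/-- `Z^s_(ℓ)(G)`, the specified `ℓ`-leaky forcing number of `G`. -/
noncomputable def Zspec (G : SimpleGraph V) (ℓ : ℕ) : ℕ :=
  sInf {n | ∃ B : Finset V, B.card = n ∧ IsSpecifiedLeakyForcingSet G ℓ ↑B}

/-- `Z^m_(ℓ)(G)`, the mixed `ℓ`-leaky forcing number of `G`. -/
noncomputable def Zmixed (G : SimpleGraph V) (ℓ : ℕ) : ℕ :=
  sInf {n | ∃ B : Finset V, B.card = n ∧ IsMixedLeakyForcingSet G ℓ ↑B}

/-- Two sets of specified leaks on `V(G)` are isomorphic if some bijection of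
the vertex set matches them up. -/
def LeaksIso (L₁ L₂ : Set (V × V)) : Prop :=
  ∃ φ : V ≃ V, ∀ x y : V, (x, y) ∈ L₁ ↔ (φ x, φ y) ∈ L₂

/-- `B` is an `L`-leaky forcing set of `G`: `B` colors all of `V(G)` blue
despite any set of specified leaks isomorphic to a subset of `L`. -/
def IsLLeakyForcingSet (G : SimpleGraph V) (L : Set (V × V)) (B : Set V) : Prop :=
  ∀ L' : Set (V × V), (∃ L₂ ⊆ L, LeaksIso L' L₂) → closureSet G L' B = Set.univ

/-- `L` is a set of independent leaks: `|T(L)| = |L|` and `T(L) ∩ H(L) = ∅`. -/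
def IsIndependentLeaks [DecidableEq V] (L : Finset (V × V)) : Prop :=
  (L.image Prod.fst).card = L.card ∧ Disjoint (L.image Prod.fst) (L.image Prod.snd)

/-- `I(L)`: the size of a largest set of independent leaks contained in `L`. -/
noncomputable def maxIndepLeaks [DecidableEq V] (L : Finset (V × V)) : ℕ :=
  sSup {n | ∃ M ⊆ L, IsIndependentLeaks M ∧ M.card = n}

/-- `Z_L(G)`, the `L`-leaky forcing number of `G`. -/
noncomputable def ZLleaky (G : SimpleGraph V) (L : Set (V × V)) : ℕ :=
  sInf {n | ∃ B : Finset V, B.card = n ∧ IsLLeakyForcingSet G L ↑B}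

/-!
Let `C` be the final blue set of `B` under leaks `P`. A leak matters at this final stage only if it
blocks a force `u → v` that the unrestricted rule would allow from `C`. For such a leak `v` is the
only white neighbor of the blue vertex `u`, so distinct blocked forces have distinct tails and no
tail is a head: the blocked forces are independent. They alone already keep `B` from forcing any
vertex outside `C`, so if independent leaks in `P` number at most `ℓ`, a specified `ℓ`-leaky forcing
set must have `C = V(G)`.
-/

/-- The forces that the zero forcing rule, with nothing prohibited, allows from the blue set `S`.
When `S` is the final blue set under given leaks, these are the forces blocked by the leaks. -/
def availableForces (G : SimpleGraph V) (S : Set V) : Set (V × V) :=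
  {p | CanForce G ∅ S p.1 p.2}

section Closure

variable {G : SimpleGraph V} {P : Set (V × V)} {B S : Set V}

theorem subset_closureSet : B ⊆ closureSet G P B :=
  fun _ => Forced.init

theorem availableForces_closureSet_subset : availableForces G (closureSet G P B) ⊆ P := by
  rintro ⟨u, v⟩ ⟨hu, hv, hadj, hother, -⟩
  by_contra hnotMem
  exact hv (Forced.force hadj hnotMem hu hother)

theorem closureSet_subset_of_availableForces_subset (hBS : B ⊆ S)
    (hP : availableForces G S ⊆ P) : closureSet G P B ⊆ S := by
  intro v hv
  induction hv with
  | init hv => exact hBS hv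
  | @force u v hadj hnotMem _ _ hu hother =>
    by_contra hv
    exact hnotMem (hP ⟨hu, hv, hadj, hother, Set.notMem_empty _⟩)

theorem injOn_fst_availableForces : Set.InjOn Prod.fst (availableForces G S) := by
  rintro ⟨u, v⟩ ⟨-, -, -, hother, -⟩ ⟨_, w⟩ ⟨-, hw, hadj, -, -⟩ rfl
  by_contra hne
  exact hw (hother w hadj fun hwv => hne (by rw [hwv]))

theorem disjoint_fst_snd_availableForces :
    Disjoint (Prod.fst '' availableForces G S) (Prod.snd '' availableForces G S) := by
  rw [Set.disjoint_left]
  rintro _ ⟨p, hp, rfl⟩ ⟨q, hq, hqp⟩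
  exact hq.2.1 (hqp ▸ hp.1)

end Closure

section Independent

variable [DecidableEq V] {L M : Finset (V × V)}

theorem isIndependentLeaks_iff :
    IsIndependentLeaks M ↔ Set.InjOn Prod.fst (M : Set (V × V)) ∧
      Disjoint (Prod.fst '' (M : Set (V × V))) (Prod.snd '' (M : Set (V × V))) := by
  rw [IsIndependentLeaks, Finset.card_image_iff, ← Finset.disjoint_coe, Finset.coe_image,
    Finset.coe_image]

theorem isIndependentLeaks_of_subset_availableForces {G : SimpleGraph V} {S : Set V}
    (hM : ↑M ⊆ availableForces G S) : IsIndependentLeaks M :=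
  isIndependentLeaks_iff.2 ⟨injOn_fst_availableForces.mono hM,
    disjoint_fst_snd_availableForces.mono (Set.image_mono hM) (Set.image_mono hM)⟩

theorem IsIndependentLeaks.image_prodMap {W : Type*} [DecidableEq W] {φ : V → W}
    (hφ : φ.Injective) (hM : IsIndependentLeaks M) :
    IsIndependentLeaks (M.image (Prod.map φ φ)) := by
  have fst_image : (M.image (Prod.map φ φ)).image Prod.fst = (M.image Prod.fst).image φ := by
    simp only [Finset.image_image, Prod.map_fst']
  have snd_image : (M.image (Prod.map φ φ)).image Prod.snd = (M.image Prod.snd).image φ := by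
    simp only [Finset.image_image, Prod.map_snd']
  rw [IsIndependentLeaks, fst_image, snd_image, Finset.card_image_of_injective _ hφ,
    Finset.card_image_of_injective _ (hφ.prodMap hφ), Finset.disjoint_image hφ]
  exact hM

theorem IsIndependentLeaks.card_le_maxIndepLeaks (hM : IsIndependentLeaks M) (hML : M ⊆ L) :
    M.card ≤ maxIndepLeaks L := by
  refine le_csSup ⟨L.card, ?_⟩ ⟨M, hML, hM, rfl⟩
  rintro _ ⟨N, hNL, -, rfl⟩
  exact Finset.card_le_card hNL

theorem IsIndependentLeaks.card_le_maxIndepLeaks_of_leaksIso {L₁ L₂ : Set (V × V)}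
    (hM : IsIndependentLeaks M) (hM₁ : ↑M ⊆ L₁) (hiso : LeaksIso L₁ L₂) (hL₂ : L₂ ⊆ ↑L) :
    M.card ≤ maxIndepLeaks L := by
  obtain ⟨φ, hφ⟩ := hiso
  have image_subset : M.image (Prod.map φ φ) ⊆ L :=
    Finset.image_subset_iff.2 fun p hp => hL₂ ((hφ p.1 p.2).1 (hM₁ hp))
  rw [← Finset.card_image_of_injective M (φ.injective.prodMap φ.injective)]
  exact (hM.image_prodMap φ.injective).card_le_maxIndepLeaks image_subset

end Independent

section LeakyForcingSets

variable {G : SimpleGraph V} {ℓ : ℕ}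

theorem isSpecifiedLeakyForcingSet_univ : IsSpecifiedLeakyForcingSet G ℓ Set.univ :=
  fun _ _ _ => Set.univ_subset_iff.1 subset_closureSet

variable [DecidableEq V] {B : Set V}

theorem IsSpecifiedLeakyForcingSet.closureSet_eq_univ {P : Set (V × V)}
    (hB : IsSpecifiedLeakyForcingSet G ℓ B)
    (hP : ∀ M : Finset (V × V), ↑M ⊆ P → IsIndependentLeaks M → M.card ≤ ℓ) :
    closureSet G P B = Set.univ := by
  set A := availableForces G (closureSet G P B)
  have card_le (M : Finset (V × V)) (hM : ↑M ⊆ A) : M.card ≤ ℓ :=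
    hP M (hM.trans availableForces_closureSet_subset)
      (isIndependentLeaks_of_subset_availableForces hM)
  have finite_A : A.Finite := by
    by_contra hinf
    obtain ⟨M, hM, hcard⟩ := Set.Infinite.exists_subset_card_eq hinf (ℓ + 1)
    exact (card_le M hM).not_gt (by lia)
  obtain ⟨M, hM⟩ := finite_A.exists_finset_coe
  have closure_M : closureSet G ↑M B = Set.univ :=
    hB M (fun p hp => (hM.le hp).2.2.1) (card_le M hM.le)
  rw [← Set.univ_subset_iff, ← closure_M]
  exact closureSet_subset_of_availableForces_subset subset_closureSet hM.ge

theorem IsSpecifiedLeakyForcingSet.isLLeakyForcingSet {L : Finset (V × V)}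
    (hB : IsSpecifiedLeakyForcingSet G ℓ B) (hℓ : maxIndepLeaks L ≤ ℓ) :
    IsLLeakyForcingSet G ↑L B := by
  rintro L₁ ⟨L₂, hL₂, hiso⟩
  exact hB.closureSet_eq_univ fun M hM hindep =>
    (hindep.card_le_maxIndepLeaks_of_leaksIso hM hiso hL₂).trans hℓ

end LeakyForcingSets

-- On an infinite graph `Zspec G ℓ` is the junk value `0` when no finite set `B` qualifies.
theorem statement13_general [DecidableEq V] (G : SimpleGraph V) (L : Finset (V × V)) (ℓ : ℕ)
    (hℓ : maxIndepLeaks L ≤ ℓ) :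
    (∀ B : Set V, IsSpecifiedLeakyForcingSet G ℓ B → IsLLeakyForcingSet G ↑L B) ∧
      ((∃ B : Finset V, IsSpecifiedLeakyForcingSet G ℓ ↑B) → ZLleaky G ↑L ≤ Zspec G ℓ) := by
  refine ⟨fun B hB => hB.isLLeakyForcingSet hℓ, fun ⟨B₀, hB₀⟩ => ?_⟩
  obtain ⟨B, hcard, hB⟩ : ∃ B : Finset V, B.card = Zspec G ℓ ∧ IsSpecifiedLeakyForcingSet G ℓ ↑B :=
    Nat.sInf_mem (s := {n | ∃ B : Finset V, B.card = n ∧ IsSpecifiedLeakyForcingSet G ℓ ↑B})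
      ⟨B₀.card, B₀, rfl, hB₀⟩
  exact Nat.sInf_le ⟨B, hcard, hB.isLLeakyForcingSet hℓ⟩

/-- Theorem `ind`: if `L` is a set of specified leaks on
`V(G)` and `ℓ = I(L)`, then every specified `ℓ`-leaky forcing set is an
`L`-leaky forcing set; in particular `Z_L(G) ≤ Z^s_(ℓ)(G)`. -/
theorem statement13 [Fintype V] [DecidableEq V] (G : SimpleGraph V)
    (L : Finset (V × V)) (ℓ : ℕ) (hℓ : ℓ = maxIndepLeaks L) :
    (∀ B : Set V, IsSpecifiedLeakyForcingSet G ℓ B → IsLLeakyForcingSet G (↑L) B) ∧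
      ZLleaky G (↑L) ≤ Zspec G ℓ := by
  obtain ⟨leaky, number_le⟩ := statement13_general G L ℓ hℓ.ge
  exact ⟨leaky, number_le ⟨Finset.univ, Finset.coe_univ (α := V) ▸ isSpecifiedLeakyForcingSet_univ⟩⟩
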